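/- Let E ⊆ ℝ^l and let S ⊆ E × ℝ^m be lower semi-continuous. Let T ⊆ E × ℝ^m be the set such that for every x ∈ E the fiber T_x = {y ∈ ℝ^m : (x,y) ∈ T} is the closure of the convex hull of S_x = {y ∈ ℝ^m : (x,y) ∈ S}. Then T is lower semi-continuous. -/

import Mathlib

/-!
Fix a base point and call `y` a *lower limit point* of a family of sets `A` along a filter if every
neighborhood of `y` meets `A x'` for eventually all `x'`. The set of lower limit points is always
closed, and it is convex when every `A x'` is convex, because convex combinations are continuous.
Applied to `A x' = convexHull S_{x'}`, whose lower limit points at `x` contain `S_x` by lower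
semi-continuity of `S`, this shows that they contain all of `closure (convexHull S_x) = T_x`.
-/

/-- `T ⊆ E × ℝ^m` is lower semi-continuous: for every `(x,y) ∈ T` and open `V ∋ y` there is
a neighborhood `U` of `x` in `E` such that `T_{x'} ∩ V ≠ ∅` for every `x' ∈ U`. -/
def LowerSemiCts {l m : ℕ} (E : Set (Fin l → ℝ)) (T : Set ((Fin l → ℝ) × (Fin m → ℝ))) :
    Prop :=
  ∀ x ∈ E, ∀ y : Fin m → ℝ, (x, y) ∈ T → ∀ V : Set (Fin m → ℝ), IsOpen V → y ∈ V →
    ∃ O : Set (Fin l → ℝ), IsOpen O ∧ x ∈ O ∧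
      ∀ x' ∈ E ∩ O, ∃ y' : Fin m → ℝ, (x', y') ∈ T ∧ y' ∈ V

open Topology Filter

/-- The lower limit (in the sense of Kuratowski) of the family of sets `A` along the filter `F`. -/
def lowerLimit {X Y : Type*} [TopologicalSpace Y] (F : Filter X) (A : X → Set Y) : Set Y :=
  {y | ∀ V : Set Y, IsOpen V → y ∈ V → ∀ᶠ x in F, (A x ∩ V).Nonempty}

theorem isClosed_lowerLimit {X Y : Type*} [TopologicalSpace Y] (F : Filter X) (A : X → Set Y) :
    IsClosed (lowerLimit F A) := by
  refine isClosed_of_closure_subset fun y hy V hV hyV => ?_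
  obtain ⟨z, hzV, hz⟩ := mem_closure_iff.1 hy V hV hyV
  exact hz V hV hzV

theorem convex_lowerLimit {X Y : Type*} [AddCommGroup Y] [Module ℝ Y] [TopologicalSpace Y]
    [ContinuousAdd Y] [ContinuousConstSMul ℝ Y] (F : Filter X) (A : X → Set Y)
    (hA : ∀ x, Convex ℝ (A x)) : Convex ℝ (lowerLimit F A) := by
  intro y hy z hz a b ha hb hab V hV hV'
  have hc : Continuous fun p : Y × Y => a • p.1 + b • p.2 := by fun_prop
  obtain ⟨V₁, V₂, h₁, h₂, hy₁, hz₂, hsub⟩ :=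
    isOpen_prod_iff.1 (hV.preimage hc) y z hV'
  filter_upwards [hy V₁ h₁ hy₁, hz V₂ h₂ hz₂] with x ⟨u, hu, hu₁⟩ ⟨v, hv, hv₂⟩
  exact ⟨a • u + b • v, hA x hu hv ha hb hab, hsub (Set.mk_mem_prod hu₁ hv₂)⟩

/-- the fiberwise closed convex hull of a lower semi-continuous set is lower
semi-continuous. -/
theorem statement19 (l m : ℕ) (E : Set (Fin l → ℝ))
    (S T : Set ((Fin l → ℝ) × (Fin m → ℝ)))
    (hS : ∀ p ∈ S, p.1 ∈ E) (hT : ∀ p ∈ T, p.1 ∈ E)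
    (hSlsc : LowerSemiCts E S)
    (hTfib : ∀ x ∈ E, {y | (x, y) ∈ T} = closure (convexHull ℝ {y | (x, y) ∈ S})) :
    LowerSemiCts E T := by
  intro x hx y hy V hV hyV
  set A : (Fin l → ℝ) → Set (Fin m → ℝ) := fun x' => convexHull ℝ {y | (x', y) ∈ S} with hA
  have hSx : {y | (x, y) ∈ S} ⊆ lowerLimit (𝓝[E] x) A := by
    intro z hz W hW hzW
    obtain ⟨O, hO, hxO, h⟩ := hSlsc x hx z hz W hW hzW
    filter_upwards [inter_mem_nhdsWithin E (hO.mem_nhds hxO)] with x' hx'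
    obtain ⟨z', hz', hzW'⟩ := h x' hx'
    exact ⟨z', subset_convexHull ℝ _ hz', hzW'⟩
  have hTx : closure (A x) ⊆ lowerLimit (𝓝[E] x) A :=
    closure_minimal
      (convexHull_min hSx (convex_lowerLimit _ _ fun x' => convex_convexHull ℝ _))
      (isClosed_lowerLimit _ _)
  have hyT : y ∈ closure (A x) := (hTfib x hx).subset hy
  obtain ⟨O, hO, hxO, h⟩ := mem_nhdsWithin.1 (hTx hyT V hV hyV)
  refine ⟨O, hO, hxO, fun x' hx' => ?_⟩
  obtain ⟨y', hy', hyV'⟩ := h ⟨hx'.2, hx'.1⟩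
  exact ⟨y', (hTfib x' hx'.1).superset (subset_closure hy'), hyV'⟩
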